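/- arXiv:1602.04057 — 3 statements merged into one kernel-verified Lean document; each statement's English description precedes it below -/
import Mathlib

section
/- Let E be a real separable Banach space and Ψ : E → ℝ a bounded function of class C² with bounded first and second Fréchet derivatives, with sup_{x∈E} ‖D²Ψ(x)‖ ≤ M. Let X and Z be independent E-valued random variables with Z Bochner integrable, 𝔼[Z] = 0, and 𝔼[‖Z‖²] < ∞. Then |𝔼[Ψ(X + Z)] − 𝔼[Ψ(X)]| ≤ (M/2) 𝔼[‖Z‖²]. -/
open MeasureTheory ProbabilityTheory

/-!
Expand `Ψ (X + Z)` to first order at `X`. Since `DΨ` is `M`-Lipschitz, the Taylor remainder is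
pointwise at most `M / 2 * ‖Z‖ ^ 2`. The linear term `DΨ(X) Z` is therefore integrable, being
the difference between `Ψ (X + Z) - Ψ X` and the remainder. By independence and Fubini one may
integrate it over `Z` with `X` frozen, and `𝔼[DΨ(x) Z] = DΨ(x) 𝔼[Z] = 0` for every `x`, so only the
remainder contributes to the weak error.
-/

open Set
open scoped NNReal

section TaylorRemainder

variable {F : Type*} [NormedAddCommGroup F] [NormedSpace ℝ F]

lemma norm_sub_sub_smul_deriv_le_of_norm_deriv_sub_le {g g' : ℝ → F} {a b C : ℝ} (hab : a ≤ b)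
    (hg : ∀ t ∈ Icc a b, HasDerivWithinAt g (g' t) (Icc a b) t)
    (hg' : ∀ t ∈ Ico a b, ‖g' t - g' a‖ ≤ C * (t - a)) :
    ‖g b - g a - (b - a) • g' a‖ ≤ C / 2 * (b - a) ^ 2 := by
  have hrem : ∀ t ∈ Icc a b,
      HasDerivWithinAt (fun s ↦ g s - g a - (s - a) • g' a) (g' t - g' a) (Icc a b) t := by
    intro t ht
    have hlin : HasDerivWithinAt (fun s ↦ (s - a) • g' a) (g' a) (Icc a b) t := by
      simpa using (((hasDerivAt_id t).sub_const a).smul_const (g' a)).hasDerivWithinAt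
    exact ((hg t ht).sub_const (g a)).sub hlin
  have hbound : ∀ t, HasDerivAt (fun s ↦ C / 2 * (s - a) ^ 2) (C * (t - a)) t := fun t ↦
    ((((hasDerivAt_id t).sub_const a).pow 2).const_mul (C / 2)).congr_deriv
      (by simp only [id]; ring)
  exact image_norm_le_of_norm_deriv_right_le_deriv_boundary
    (fun t ht ↦ (hrem t ht).continuousWithinAt)
    (fun t ht ↦ (hrem t (Ico_subset_Icc_self ht)).mono_of_mem_nhdsWithin
      (Icc_mem_nhdsGE_of_mem ht))
    (by simp) hbound hg' (right_mem_Icc.2 hab)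

lemma norm_add_sub_sub_fderiv_le_of_lipschitzWith {E : Type*} [NormedAddCommGroup E]
    [NormedSpace ℝ E] {f : E → F} {K : ℝ≥0} (hf : Differentiable ℝ f)
    (hf' : LipschitzWith K (fderiv ℝ f)) (x z : E) :
    ‖f (x + z) - f x - fderiv ℝ f x z‖ ≤ K / 2 * ‖z‖ ^ 2 := by
  have hline : ∀ t : ℝ, HasDerivAt (fun s : ℝ ↦ f (x + s • z)) (fderiv ℝ f (x + t • z) z) t := by
    intro t
    have hpath : HasDerivAt (fun s : ℝ ↦ x + s • z) z t := by
      simpa using ((hasDerivAt_id t).smul_const z).const_add x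
    exact (hf (x + t • z)).hasFDerivAt.comp_hasDerivAt t hpath
  have hline' : ∀ t ∈ Ico (0 : ℝ) 1,
      ‖fderiv ℝ f (x + t • z) z - fderiv ℝ f (x + (0 : ℝ) • z) z‖ ≤ K * ‖z‖ ^ 2 * (t - 0) := by
    intro t ht
    calc ‖fderiv ℝ f (x + t • z) z - fderiv ℝ f (x + (0 : ℝ) • z) z‖
        = ‖(fderiv ℝ f (x + t • z) - fderiv ℝ f x) z‖ := by simp
      _ ≤ ‖fderiv ℝ f (x + t • z) - fderiv ℝ f x‖ * ‖z‖ := ContinuousLinearMap.le_opNorm _ _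
      _ ≤ K * ‖x + t • z - x‖ * ‖z‖ := by gcongr; exact hf'.norm_sub_le _ _
      _ = K * ‖z‖ ^ 2 * (t - 0) := by
        rw [add_sub_cancel_left, norm_smul, Real.norm_of_nonneg ht.1]; ring
  have hunit := norm_sub_sub_smul_deriv_le_of_norm_deriv_sub_le zero_le_one
    (fun t _ ↦ (hline t).hasDerivWithinAt) hline'
  simpa [mul_div_right_comm] using hunit

end TaylorRemainder

section Independence

variable {Ω : Type*} [MeasurableSpace Ω] {μ : Measure Ω} [IsFiniteMeasure μ]
  {E : Type*} [NormedAddCommGroup E] [NormedSpace ℝ E] [CompleteSpace E] [MeasurableSpace E]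
  [BorelSpace E]
  {F : Type*} [NormedAddCommGroup F] [NormedSpace ℝ F] [CompleteSpace F]

lemma integral_clm_apply_of_indepFun {α : Type*} [MeasurableSpace α] {A : α → E →L[ℝ] F}
    {X : Ω → α} {Z : Ω → E} (hX : AEMeasurable X μ) (hZ : Integrable Z μ)
    (hindep : IndepFun X Z μ)
    (hA : AEStronglyMeasurable (fun p : α × E ↦ A p.1 p.2) (μ.map fun ω ↦ (X ω, Z ω)))
    (hAXZ : Integrable (fun ω ↦ A (X ω) (Z ω)) μ) :
    ∫ ω, A (X ω) (Z ω) ∂μ = ∫ x, A x (∫ ω, Z ω ∂μ) ∂μ.map X := by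
  have hZm : AEMeasurable Z μ := hZ.aemeasurable
  have hid : AEStronglyMeasurable id (μ.map Z) :=
    hZ.aestronglyMeasurable.aestronglyMeasurable_id_map
  have hmean : ∫ z, z ∂μ.map Z = ∫ ω, Z ω ∂μ := integral_map hZm hid
  have hprod : μ.map (fun ω ↦ (X ω, Z ω)) = (μ.map X).prod (μ.map Z) :=
    hindep.map_prod_eq_prod_map_map hX hZm
  have hAprod : Integrable (fun p : α × E ↦ A p.1 p.2) ((μ.map X).prod (μ.map Z)) :=
    hprod ▸ (integrable_map_measure hA (hX.prodMk hZm)).2 hAXZ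
  calc ∫ ω, A (X ω) (Z ω) ∂μ
      = ∫ p, A p.1 p.2 ∂(μ.map X).prod (μ.map Z) := by
        rw [← hprod, integral_map (hX.prodMk hZm) hA]
    _ = ∫ x, ∫ z, A x z ∂μ.map Z ∂μ.map X := integral_prod _ hAprod
    _ = ∫ x, A x (∫ ω, Z ω ∂μ) ∂μ.map X := by
        simp_rw [← hmean]
        congr with x
        exact (A x).integral_comp_comm ((integrable_map_measure hid hZm).2 hZ)

theorem second_order_weak_error_bound_general [SecondCountableTopology E]
    {Ψ : E → F} {M : ℝ≥0} (hΨ : Differentiable ℝ Ψ) (hΨ' : LipschitzWith M (fderiv ℝ Ψ))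
    {X Z : Ω → E} (hX : AEMeasurable X μ) (hindep : IndepFun X Z μ) (hZ : MemLp Z 2 μ)
    (hZmean : ∫ ω, Z ω ∂μ = 0) (hΨX : Integrable (fun ω ↦ Ψ (X ω)) μ)
    (hΨXZ : Integrable (fun ω ↦ Ψ (X ω + Z ω)) μ) :
    ‖(∫ ω, Ψ (X ω + Z ω) ∂μ) - ∫ ω, Ψ (X ω) ∂μ‖ ≤ M / 2 * ∫ ω, ‖Z ω‖ ^ 2 ∂μ := by
  have hZsq : Integrable (fun ω ↦ M / 2 * ‖Z ω‖ ^ 2) μ :=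
    (hZ.integrable_norm_pow two_ne_zero).const_mul _
  have hrem_le : ∀ ω, ‖Ψ (X ω + Z ω) - Ψ (X ω) - fderiv ℝ Ψ (X ω) (Z ω)‖ ≤ M / 2 * ‖Z ω‖ ^ 2 :=
    fun ω ↦ norm_add_sub_sub_fderiv_le_of_lipschitzWith hΨ hΨ' (X ω) (Z ω)
  have hcont : Continuous fun p : E × E ↦ fderiv ℝ Ψ p.1 p.2 :=
    (hΨ'.continuous.comp continuous_fst).clm_apply continuous_snd
  have hdiff : Integrable (fun ω ↦ Ψ (X ω + Z ω) - Ψ (X ω)) μ := hΨXZ.sub hΨX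
  have hrem : Integrable (fun ω ↦ Ψ (X ω + Z ω) - Ψ (X ω) - fderiv ℝ Ψ (X ω) (Z ω)) μ :=
    hZsq.mono' (hdiff.aestronglyMeasurable.sub (hcont.comp_aestronglyMeasurable
      (hX.aestronglyMeasurable.prodMk hZ.aestronglyMeasurable))) (ae_of_all _ hrem_le)
  have hlin : Integrable (fun ω ↦ fderiv ℝ Ψ (X ω) (Z ω)) μ :=
    (hdiff.sub hrem).congr (ae_of_all _ fun _ ↦ sub_sub_cancel _ _)
  have hlin_mean : ∫ ω, fderiv ℝ Ψ (X ω) (Z ω) ∂μ = 0 := by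
    simpa [hZmean] using integral_clm_apply_of_indepFun hX (hZ.integrable one_le_two) hindep
      hcont.aestronglyMeasurable hlin
  calc ‖(∫ ω, Ψ (X ω + Z ω) ∂μ) - ∫ ω, Ψ (X ω) ∂μ‖
      = ‖∫ ω, (Ψ (X ω + Z ω) - Ψ (X ω) - fderiv ℝ Ψ (X ω) (Z ω)) ∂μ‖ := by
        rw [integral_sub hdiff hlin, integral_sub hΨXZ hΨX, hlin_mean, sub_zero]
    _ ≤ ∫ ω, M / 2 * ‖Z ω‖ ^ 2 ∂μ := norm_integral_le_of_norm_le hZsq (ae_of_all _ hrem_le)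
    _ = M / 2 * ∫ ω, ‖Z ω‖ ^ 2 ∂μ := integral_const_mul _ _

end Independence

/-- Weak-order-is-twice-strong-order mechanism: if `Ψ : E → ℝ` is bounded and `C²` with bounded
first and second derivatives (`‖D²Ψ‖ ≤ M`), and `X`, `Z` are independent `E`-valued random
variables with `Z` integrable, centred, and square integrable, then
`|𝔼[Ψ(X+Z)] − 𝔼[Ψ(X)]| ≤ (M/2) 𝔼[‖Z‖²]`. -/
theorem second_order_weak_error_bound
    {Ω : Type*} [MeasurableSpace Ω] (μ : Measure Ω) [IsProbabilityMeasure μ]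
    {E : Type*} [NormedAddCommGroup E] [NormedSpace ℝ E] [CompleteSpace E]
    [SecondCountableTopology E] [MeasurableSpace E] [BorelSpace E]
    (Ψ : E → ℝ) (CΨ L M : ℝ)
    (hΨb : ∀ x : E, |Ψ x| ≤ CΨ)
    (hΨ : ContDiff ℝ 2 Ψ)
    (hΨ1 : ∀ x : E, ‖fderiv ℝ Ψ x‖ ≤ L)
    (hΨ2 : ∀ x : E, ‖fderiv ℝ (fderiv ℝ Ψ) x‖ ≤ M)
    (X Z : Ω → E) (hX : Measurable X) (hZ : Measurable Z)
    (hindep : IndepFun X Z μ)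
    (hZint : Integrable Z μ) (hZmean : ∫ ω, Z ω ∂μ = 0)
    (hZsq : Integrable (fun ω => ‖Z ω‖ ^ 2) μ) :
    |(∫ ω, Ψ (X ω + Z ω) ∂μ) - ∫ ω, Ψ (X ω) ∂μ| ≤ M / 2 * ∫ ω, ‖Z ω‖ ^ 2 ∂μ := by
  lift M to ℝ≥0 using (norm_nonneg (fderiv ℝ (fderiv ℝ Ψ) 0)).trans (hΨ2 0)
  have hΨ' : LipschitzWith M (fderiv ℝ Ψ) := lipschitzWith_of_nnnorm_fderiv_le
    ((hΨ.fderiv_right one_add_one_eq_two.le).differentiable one_ne_zero) hΨ2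
  have hint : ∀ {Y : Ω → E}, Measurable Y → Integrable (fun ω ↦ Ψ (Y ω)) μ := fun hY ↦
    .of_bound (hΨ.continuous.measurable.comp hY).aestronglyMeasurable CΨ (ae_of_all _ fun _ ↦ hΨb _)
  exact second_order_weak_error_bound_general (hΨ.differentiable two_ne_zero) hΨ' hX.aemeasurable
    hindep ((memLp_two_iff_integrable_sq_norm hZ.aestronglyMeasurable).2 hZsq) hZmean (hint hX)
    (hint (hX.add hZ))
end

section
/- Let m ≥ 2 be an integer and θ ∈ (0,2). There exists a constant C = C(m,θ) such that for every integer N ≥ 1, ∑_{k∈ℤ, |k|≤N} ∑_{ℓ∈ℤ, |ℓ|>N} |ℓ−k|^{−2m} (|ℓ|+1)^{−θ} ≤ C N^{−θ}. -/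
open Real

/-!
If `|k| ≤ N < |ℓ|`, then `|ℓ - k|` is at least both `N + 1 - |k|` and `|ℓ| - N`, two positive
integers. Giving half of the exponent to each decouples the two variables,
`|ℓ - k| ^ (-s) ≤ (N + 1 - |k|) ^ (-s/2) * (|ℓ| - N) ^ (-s/2)`, and each factor is a translated and
reflected copy of `|n| ^ (-s/2)`, which is summable for `s > 2` with a sum independent of `N`.
The weight `(|ℓ| + 1) ^ (-θ)` is at most `N ^ (-θ)` throughout.
-/

lemma rpow_neg_le_rpow_neg_half_mul_rpow_neg_half {a b d s : ℝ} (ha : 0 < a) (hb : 0 < b)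
    (had : a ≤ d) (hbd : b ≤ d) (hs : 0 ≤ s) :
    d ^ (-s) ≤ a ^ (-(s / 2)) * b ^ (-(s / 2)) := by
  have hd : 0 < d := ha.trans_le had
  have hs' : -(s / 2) ≤ 0 := by linarith
  calc d ^ (-s) = d ^ (-(s / 2)) * d ^ (-(s / 2)) := by rw [← rpow_add hd]; ring_nf
    _ ≤ a ^ (-(s / 2)) * b ^ (-(s / 2)) :=
        mul_le_mul (rpow_le_rpow_of_nonpos ha had hs') (rpow_le_rpow_of_nonpos hb hbd hs')
          (rpow_nonneg hd.le _) (rpow_nonneg ha.le _)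

section CompAbs

variable {G : Type*} [AddGroup G] [LinearOrder G]

lemma comp_abs_le_add_comp_neg {f : G → ℝ} (hf₀ : ∀ x, 0 ≤ f x) (x : G) :
    f |x| ≤ f x + f (-x) := by
  rcases abs_choice x with h | h <;> rw [h]
  · exact le_add_of_nonneg_right (hf₀ _)
  · exact le_add_of_nonneg_left (hf₀ _)

lemma summable_comp_abs {f : G → ℝ} (hf₀ : ∀ x, 0 ≤ f x) (hf : Summable f) :
    Summable fun x ↦ f |x| :=
  .of_nonneg_of_le (fun _ ↦ hf₀ _) (comp_abs_le_add_comp_neg hf₀)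
    (hf.add ((Equiv.neg G).summable_iff.mpr hf))

lemma tsum_comp_abs_le {f : G → ℝ} (hf₀ : ∀ x, 0 ≤ f x) (hf : Summable f) :
    ∑' x, f |x| ≤ 2 * ∑' x, f x := by
  have hf_neg : Summable fun x ↦ f (-x) := (Equiv.neg G).summable_iff.mpr hf
  calc ∑' x, f |x| ≤ ∑' x, (f x + f (-x)) :=
        (summable_comp_abs hf₀ hf).tsum_le_tsum (comp_abs_le_add_comp_neg hf₀) (hf.add hf_neg)
    _ = ∑' x, f x + ∑' x, f (-x) := hf.tsum_add hf_neg
    _ = ∑' x, f x + ∑' x, f x := congrArg (_ + ·) ((Equiv.neg G).tsum_eq f)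
    _ = 2 * ∑' x, f x := (two_mul _).symm

variable {α : Type*} {f : α → ℝ}

lemma summable_comp_equiv_abs (hf₀ : ∀ a, 0 ≤ f a) (hf : Summable f) (e : G ≃ α) :
    Summable fun x ↦ f (e |x|) :=
  summable_comp_abs (f := f ∘ e) (fun _ ↦ hf₀ _) (e.summable_iff.mpr hf)

lemma tsum_comp_equiv_abs_le (hf₀ : ∀ a, 0 ≤ f a) (hf : Summable f) (e : G ≃ α) :
    ∑' x, f (e |x|) ≤ 2 * ∑' a, f a := by
  rw [← e.tsum_eq f]
  exact tsum_comp_abs_le (f := f ∘ e) (fun _ ↦ hf₀ _) (e.summable_iff.mpr hf)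

end CompAbs

lemma summable_and_tsum_tsum_le_of_le_mul {ι κ : Type*} {f : ι → κ → ℝ} {u : ι → ℝ} {v : κ → ℝ}
    (hu : Summable u) (hv : Summable v) (hf₀ : ∀ i j, 0 ≤ f i j)
    (hle : ∀ i j, f i j ≤ u i * v j) :
    Summable (Function.uncurry f) ∧ ∑' i, ∑' j, f i j ≤ (∑' i, u i) * ∑' j, v j := by
  have huv : Summable fun p : ι × κ ↦ u p.1 * v p.2 :=
    summable_mul_of_summable_norm hu.norm hv.norm
  have hf : Summable (Function.uncurry f) :=
    .of_nonneg_of_le (fun p ↦ hf₀ p.1 p.2) (fun p ↦ hle p.1 p.2) huv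
  refine ⟨hf, ?_⟩
  calc ∑' i, ∑' j, f i j = ∑' p, Function.uncurry f p := hf.tsum_prod.symm
    _ ≤ ∑' p : ι × κ, u p.1 * v p.2 := hf.tsum_le_tsum (fun p ↦ hle p.1 p.2) huv
    _ = (∑' i, u i) * ∑' j, v j := (hu.tsum_mul_tsum hv huv).symm

/-- The kernel `|ℓ - k| ^ (-s) * (|ℓ| + 1) ^ (-θ)` restricted to the low-high frequency block
`|k| ≤ N < |ℓ|`, and extended by zero so that it can be summed over all of `ℤ × ℤ`. -/
noncomputable def lowHighKernel (s θ : ℝ) (N : ℕ) (k l : ℤ) : ℝ :=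
  if |k| ≤ (N : ℤ) ∧ (N : ℤ) < |l| then
    |(l : ℝ) - (k : ℝ)| ^ (-s) * (|(l : ℝ)| + 1) ^ (-θ)
  else 0

lemma lowHighKernel_nonneg (s θ : ℝ) (N : ℕ) (k l : ℤ) : 0 ≤ lowHighKernel s θ N k l := by
  unfold lowHighKernel
  split_ifs <;> positivity

lemma abs_sub_rpow_neg_le_of_abs_le_of_lt_abs {s : ℝ} (hs : 0 ≤ s) {k l N : ℤ}
    (hk : |k| ≤ N) (hl : N < |l|) :
    |(l : ℝ) - k| ^ (-s) ≤
      |((N + 1 - |k| : ℤ) : ℝ)| ^ (-(s / 2)) * |((|l| - N : ℤ) : ℝ)| ^ (-(s / 2)) := by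
  have hsub : |l| - |k| ≤ |l - k| := abs_sub_abs_le_abs_sub l k
  have hk_pos : 0 < N + 1 - |k| := by omega
  have hl_pos : 0 < |l| - N := by omega
  have hk_le : |(N + 1 - |k|)| ≤ |l - k| := by rw [abs_of_pos hk_pos]; omega
  have hl_le : |(|l| - N)| ≤ |l - k| := by rw [abs_of_pos hl_pos]; omega
  apply rpow_neg_le_rpow_neg_half_mul_rpow_neg_half _ _ _ _ hs
  · exact_mod_cast abs_pos.mpr hk_pos.ne'
  · exact_mod_cast abs_pos.mpr hl_pos.ne'
  · exact_mod_cast hk_le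
  · exact_mod_cast hl_le

lemma lowHighKernel_le {s θ : ℝ} (hs : 0 ≤ s) (hθ : 0 ≤ θ) {N : ℕ} (hN : 1 ≤ N) (k l : ℤ) :
    lowHighKernel s θ N k l ≤
      (N : ℝ) ^ (-θ) * |((N + 1 - |k| : ℤ) : ℝ)| ^ (-(s / 2)) *
        |((|l| - N : ℤ) : ℝ)| ^ (-(s / 2)) := by
  unfold lowHighKernel
  split_ifs with hkl
  · have hNl : (N : ℝ) ≤ |(l : ℝ)| + 1 := by
      have : (N : ℝ) < |(l : ℝ)| := by exact_mod_cast hkl.2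
      linarith
    have hweight : (|(l : ℝ)| + 1) ^ (-θ) ≤ (N : ℝ) ^ (-θ) :=
      rpow_le_rpow_of_nonpos (by exact_mod_cast hN) hNl (neg_nonpos.mpr hθ)
    rw [mul_comm, mul_assoc]
    exact mul_le_mul hweight (abs_sub_rpow_neg_le_of_abs_le_of_lt_abs hs hkl.1 hkl.2)
      (by positivity) (by positivity)
  · positivity

theorem double_sum_block_estimate_low_high_general (s : ℝ) (hs : 2 < s) :
    ∃ C : ℝ, 0 < C ∧ ∀ θ : ℝ, 0 ≤ θ → ∀ N : ℕ, 1 ≤ N →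
      Summable (Function.uncurry (lowHighKernel s θ N)) ∧
        ∑' k, ∑' l, lowHighKernel s θ N k l ≤ C * (N : ℝ) ^ (-θ) := by
  let g : ℤ → ℝ := fun n ↦ |(n : ℝ)| ^ (-(s / 2))
  have hg₀ (n : ℤ) : 0 ≤ g n := by positivity
  have hg : Summable g := summable_abs_int_rpow (by linarith)
  have hg_pos : 0 < ∑' n, g n := hg.tsum_pos hg₀ 1 (by simp [g])
  refine ⟨(2 * ∑' n, g n) ^ 2, by positivity, fun θ hθ N hN ↦ ?_⟩
  let low : ℤ ≃ ℤ := Equiv.subLeft (N + 1)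
  let high : ℤ ≃ ℤ := Equiv.subRight N
  obtain ⟨hsum, hle⟩ := summable_and_tsum_tsum_le_of_le_mul
    ((summable_comp_equiv_abs hg₀ hg low).mul_left ((N : ℝ) ^ (-θ)))
    (summable_comp_equiv_abs hg₀ hg high) (lowHighKernel_nonneg s θ N)
    (lowHighKernel_le (by linarith) hθ hN)
  refine ⟨hsum, hle.trans ?_⟩
  calc (∑' k, (N : ℝ) ^ (-θ) * g (low |k|)) * ∑' l, g (high |l|)
      = (N : ℝ) ^ (-θ) * ((∑' k, g (low |k|)) * ∑' l, g (high |l|)) := by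
        rw [tsum_mul_left, mul_assoc]
    _ ≤ (N : ℝ) ^ (-θ) * ((2 * ∑' n, g n) * (2 * ∑' n, g n)) := by
        gcongr ?_ * ?_
        exact mul_le_mul (tsum_comp_equiv_abs_le hg₀ hg low) (tsum_comp_equiv_abs_le hg₀ hg high)
          (tsum_nonneg fun _ ↦ hg₀ _) (by positivity)
    _ = (2 * ∑' n, g n) ^ 2 * (N : ℝ) ^ (-θ) := by ring

/-- Double sum estimate (first off-diagonal block): for `m ≥ 2` and `θ ∈ (0,2)` there is a
constant `C` such that for every `N ≥ 1`,
`∑_{|k|≤N} ∑_{|ℓ|>N} |ℓ−k|^{−2m} (|ℓ|+1)^{−θ} ≤ C N^{−θ}`. -/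
theorem double_sum_block_estimate_low_high
    (m : ℕ) (hm : 2 ≤ m) (θ : ℝ) (hθ0 : 0 < θ) (hθ2 : θ < 2) :
    ∃ C : ℝ, 0 < C ∧ ∀ N : ℕ, 1 ≤ N →
      (∑' k : ℤ, ∑' l : ℤ,
        if |k| ≤ (N : ℤ) ∧ (N : ℤ) < |l| then
          |(l : ℝ) - (k : ℝ)| ^ (-(2 * (m : ℝ))) * (|(l : ℝ)| + 1) ^ (-θ)
        else 0) ≤ C * (N : ℝ) ^ (-θ) := by
  obtain ⟨C, hC, h⟩ := double_sum_block_estimate_low_high_general (2 * m) (by norm_cast; omega)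
  exact ⟨C, hC, fun N hN ↦ (h θ hθ0.le N hN).2⟩
end

section
/- Let m ≥ 2 be an integer and θ ∈ (0,2). There exists a constant C = C(m,θ) such that for every integer N ≥ 1, ∑_{k∈ℤ, |k|>N} ∑_{ℓ∈ℤ, |ℓ|≤N} |ℓ−k|^{−2m} (|ℓ|+1)^{−θ} ≤ C (N^{−θ} + N^{−(2m−2)}) ≤ 2C N^{−θ}. -/
open Real

/-!
If `|l| ≤ N < |k|`, then `d = |l - k|` is at least both `|k| - N` and `N + 1 - |l|`, and
`N + 1 ≤ (|l| + 1) d`. The last inequality trades the weight `(|l| + 1) ^ (-θ)` for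
`(N + 1) ^ (-θ)` at the cost of `d ^ θ`. What is left of the kernel `d ^ (-p)`, namely
`d ^ (-(p - θ))`, is split evenly between `|k| - N` and `N + 1 - |l|`, which gives a product of two
convergent sums as soon as `p - θ > 2`.
-/

section RealPowers

variable {a b d q x y θ : ℝ}

lemma rpow_neg_le_rpow_neg_mul_rpow (hx : 0 < x) (hd : 0 < d) (hθ : 0 ≤ θ) (h : x ≤ y * d) :
    y ^ (-θ) ≤ x ^ (-θ) * d ^ θ := by
  calc y ^ (-θ) ≤ (x / d) ^ (-θ) :=
        rpow_le_rpow_of_nonpos (by positivity) ((div_le_iff₀ hd).2 h) (neg_nonpos.2 hθ)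
    _ = x ^ (-θ) * d ^ θ := by rw [div_rpow hx.le hd.le, rpow_neg hd.le, div_inv_eq_mul]

lemma rpow_neg_le_rpow_neg_half_mul (ha : 0 < a) (hb : 0 < b) (had : a ≤ d) (hbd : b ≤ d)
    (hq : 0 ≤ q) : d ^ (-q) ≤ a ^ (-(q / 2)) * b ^ (-(q / 2)) := by
  have hd : 0 < d := ha.trans_le had
  have hq' : -(q / 2) ≤ 0 := by linarith
  calc d ^ (-q) = d ^ (-(q / 2)) * d ^ (-(q / 2)) := by rw [← rpow_add hd]; ring_nf
    _ ≤ a ^ (-(q / 2)) * b ^ (-(q / 2)) :=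
        mul_le_mul (rpow_le_rpow_of_nonpos ha had hq') (rpow_le_rpow_of_nonpos hb hbd hq')
          (by positivity) (by positivity)

lemma rpow_neg_mul_add_one_rpow_neg_le {n p : ℝ} (hθ : 0 ≤ θ) (hp : θ ≤ p) (hy : 0 ≤ y)
    (hyn : y ≤ n) (hnx : n + 1 ≤ x) (hd : x - y ≤ d) :
    d ^ (-p) * (y + 1) ^ (-θ) ≤
      (n + 1) ^ (-θ) * ((x - n) ^ (-((p - θ) / 2)) * (n + 1 - y) ^ (-((p - θ) / 2))) := by
  have hd0 : 0 < d := by linarith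
  have hprod : n + 1 ≤ (y + 1) * d := by nlinarith
  have hweight : (y + 1) ^ (-θ) ≤ (n + 1) ^ (-θ) * d ^ θ :=
    rpow_neg_le_rpow_neg_mul_rpow (by linarith) hd0 hθ hprod
  have hsplit : d ^ (-(p - θ)) ≤ (x - n) ^ (-((p - θ) / 2)) * (n + 1 - y) ^ (-((p - θ) / 2)) :=
    rpow_neg_le_rpow_neg_half_mul (by linarith) (by linarith) (by linarith) (by linarith)
      (by linarith)
  calc d ^ (-p) * (y + 1) ^ (-θ) ≤ d ^ (-p) * ((n + 1) ^ (-θ) * d ^ θ) := by gcongr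
    _ = (n + 1) ^ (-θ) * d ^ (-(p - θ)) := by rw [mul_left_comm, ← rpow_add hd0]; ring_nf
    _ ≤ _ := mul_le_mul_of_nonneg_left hsplit (rpow_nonneg (by linarith) _)

lemma mul_rpow_neg_add_rpow_neg_le {C : ℝ} (hC : 0 ≤ C) (hx : 1 ≤ x) (hab : a ≤ b) :
    C * (x ^ (-a) + x ^ (-b)) ≤ 2 * C * x ^ (-a) := by
  have hba : x ^ (-b) ≤ x ^ (-a) := rpow_le_rpow_of_exponent_le hx (neg_le_neg hab)
  calc C * (x ^ (-a) + x ^ (-b)) ≤ C * (x ^ (-a) + x ^ (-a)) := by gcongr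
    _ = 2 * C * x ^ (-a) := by ring

end RealPowers

section ProductMajorant

variable {α β : Type*} {f : α → β → ℝ} {a : α → ℝ} {b : β → ℝ}

lemma summable_uncurry_of_le_mul (hf0 : ∀ x y, 0 ≤ f x y) (hfab : ∀ x y, f x y ≤ a x * b y)
    (ha : Summable a) (hb : Summable b) (ha0 : ∀ x, 0 ≤ a x) (hb0 : ∀ y, 0 ≤ b y) :
    Summable f.uncurry :=
  .of_nonneg_of_le (fun z ↦ hf0 z.1 z.2) (fun z ↦ hfab z.1 z.2) (ha.mul_of_nonneg hb ha0 hb0)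

lemma tsum_tsum_le_tsum_mul_tsum (hf : Summable f.uncurry) (hfab : ∀ x y, f x y ≤ a x * b y)
    (ha : Summable a) (hb : Summable b) (ha0 : ∀ x, 0 ≤ a x) (hb0 : ∀ y, 0 ≤ b y) :
    ∑' x, ∑' y, f x y ≤ (∑' x, a x) * ∑' y, b y := by
  have hab : Summable fun z : α × β ↦ a z.1 * b z.2 := ha.mul_of_nonneg hb ha0 hb0
  calc ∑' x, ∑' y, f x y = ∑' z, f.uncurry z := hf.tsum_prod.symm
    _ ≤ ∑' z : α × β, a z.1 * b z.2 := hf.tsum_le_tsum (fun z ↦ hfab z.1 z.2) hab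
    _ = (∑' x, a x) * ∑' y, b y := (ha.tsum_mul_tsum hb hab).symm

end ProductMajorant

section CompAbsSub

variable {G : Type*} [AddCommGroup G] {f : G → ℝ}

lemma hasSum_sub_add_neg_sub (hf : Summable f) (c : G) :
    HasSum (fun x ↦ f (x - c) + f (-x - c)) (2 * ∑' y, f y) := by
  rw [two_mul]
  exact ((Equiv.subRight c).hasSum_iff.2 hf.hasSum).add
    (((Equiv.neg G).trans (Equiv.subRight c)).hasSum_iff.2 hf.hasSum)

variable [LinearOrder G]

lemma comp_abs_sub_le_add (hf0 : ∀ x, 0 ≤ f x) (c x : G) :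
    f (|x| - c) ≤ f (x - c) + f (-x - c) := by
  rcases abs_choice x with hx | hx <;> rw [hx]
  · exact le_add_of_nonneg_right (hf0 _)
  · exact le_add_of_nonneg_left (hf0 _)

lemma summable_comp_abs_sub (hf : Summable f) (hf0 : ∀ x, 0 ≤ f x) (c : G) :
    Summable fun x ↦ f (|x| - c) :=
  .of_nonneg_of_le (fun _ ↦ hf0 _) (comp_abs_sub_le_add hf0 c)
    (hasSum_sub_add_neg_sub hf c).summable

lemma tsum_comp_abs_sub_le (hf : Summable f) (hf0 : ∀ x, 0 ≤ f x) (c : G) :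
    ∑' x, f (|x| - c) ≤ 2 * ∑' y, f y :=
  hasSum_le (comp_abs_sub_le_add hf0 c) (summable_comp_abs_sub hf hf0 c).hasSum
    (hasSum_sub_add_neg_sub hf c)

end CompAbsSub

/-- The power weight `n ↦ |n| ^ (-q)` on the integers, the summable profile that majorizes each
factor of the double sum. At `n = 0` it has the junk value `0` when `q ≠ 0`. -/
noncomputable def absRpowNeg (q : ℝ) (n : ℤ) : ℝ := |(n : ℝ)| ^ (-q)

lemma absRpowNeg_nonneg (q : ℝ) (n : ℤ) : 0 ≤ absRpowNeg q n := by
  unfold absRpowNeg; positivity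

lemma summable_absRpowNeg {q : ℝ} (hq : 1 < q) : Summable (absRpowNeg q) :=
  summable_abs_int_rpow hq

lemma tsum_absRpowNeg_pos {q : ℝ} (hq : 1 < q) : 0 < ∑' n, absRpowNeg q n :=
  (summable_absRpowNeg hq).tsum_pos (absRpowNeg_nonneg q) 1 (by simp [absRpowNeg])

/-- The summand `|l - k| ^ (-p) * (|l| + 1) ^ (-θ)` of the block `|l| ≤ N < |k|`, extended by zero
to all integers `k` and `l`. -/
noncomputable def highLowTerm (p θ : ℝ) (N : ℕ) (k l : ℤ) : ℝ :=
  if (N : ℤ) < |k| ∧ |l| ≤ (N : ℤ) then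
    |(l : ℝ) - (k : ℝ)| ^ (-p) * (|(l : ℝ)| + 1) ^ (-θ)
  else 0

section HighLow

variable {p θ : ℝ}

lemma highLowTerm_nonneg (p θ : ℝ) (N : ℕ) (k l : ℤ) : 0 ≤ highLowTerm p θ N k l := by
  unfold highLowTerm; positivity

lemma highLowTerm_le (hθ : 0 ≤ θ) (hp : θ ≤ p) (N : ℕ) (k l : ℤ) :
    highLowTerm p θ N k l ≤ (N + 1 : ℝ) ^ (-θ) * absRpowNeg ((p - θ) / 2) (|k| - N) *
      absRpowNeg ((p - θ) / 2) (|l| - (N + 1)) := by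
  unfold highLowTerm absRpowNeg
  split_ifs with h
  · have hk : (N : ℝ) + 1 ≤ |(k : ℝ)| := by exact_mod_cast h.1
    have hl : |(l : ℝ)| ≤ N := by exact_mod_cast h.2
    have hdist : |(k : ℝ)| - |(l : ℝ)| ≤ |(l : ℝ) - k| := by
      rw [abs_sub_comm]; exact abs_sub_abs_le_abs_sub _ _
    push_cast
    rw [abs_of_pos (by linarith : 0 < |(k : ℝ)| - N),
      abs_of_neg (by linarith : |(l : ℝ)| - (N + 1) < 0), neg_sub, mul_assoc]
    exact rpow_neg_mul_add_one_rpow_neg_le hθ hp (abs_nonneg _) hl hk hdist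
  · positivity

lemma summable_highLowTerm (hθ : 0 ≤ θ) (hp : θ + 2 < p) (N : ℕ) :
    Summable (highLowTerm p θ N).uncurry := by
  have hw := summable_absRpowNeg (q := (p - θ) / 2) (by linarith)
  have hw0 := absRpowNeg_nonneg ((p - θ) / 2)
  exact summable_uncurry_of_le_mul (highLowTerm_nonneg p θ N) (highLowTerm_le hθ (by linarith) N)
    ((summable_comp_abs_sub hw hw0 N).mul_left _) (summable_comp_abs_sub hw hw0 (N + 1))
    (fun _ ↦ mul_nonneg (by positivity) (hw0 _)) (fun _ ↦ hw0 _)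

lemma tsum_tsum_highLowTerm_le (hθ : 0 ≤ θ) (hp : θ + 2 < p) (N : ℕ) :
    ∑' k, ∑' l, highLowTerm p θ N k l ≤
      (2 * ∑' n, absRpowNeg ((p - θ) / 2) n) ^ 2 * (N + 1 : ℝ) ^ (-θ) := by
  set w := absRpowNeg ((p - θ) / 2)
  have hw : Summable w := summable_absRpowNeg (by linarith)
  have hw0 : ∀ n, 0 ≤ w n := absRpowNeg_nonneg _
  calc ∑' k, ∑' l, highLowTerm p θ N k l
      ≤ (∑' k : ℤ, (N + 1 : ℝ) ^ (-θ) * w (|k| - N)) * ∑' l : ℤ, w (|l| - (N + 1)) :=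
        tsum_tsum_le_tsum_mul_tsum (summable_highLowTerm hθ hp N)
          (highLowTerm_le hθ (by linarith) N)
          ((summable_comp_abs_sub hw hw0 N).mul_left _) (summable_comp_abs_sub hw hw0 (N + 1))
          (fun _ ↦ mul_nonneg (by positivity) (hw0 _)) (fun _ ↦ hw0 _)
    _ = (N + 1 : ℝ) ^ (-θ) * ((∑' k : ℤ, w (|k| - N)) * ∑' l : ℤ, w (|l| - (N + 1))) := by
        rw [tsum_mul_left, mul_assoc]
    _ ≤ (N + 1 : ℝ) ^ (-θ) * ((2 * ∑' n, w n) * (2 * ∑' n, w n)) := by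
        gcongr
        · exact tsum_nonneg fun _ ↦ hw0 _
        · exact mul_nonneg zero_le_two (tsum_nonneg hw0)
        · exact tsum_comp_abs_sub_le hw hw0 N
        · exact tsum_comp_abs_sub_le hw hw0 (N + 1)
    _ = (2 * ∑' n, w n) ^ 2 * (N + 1 : ℝ) ^ (-θ) := by ring

theorem double_sum_block_estimate_high_low_general (hθ : 0 ≤ θ) (hp : θ + 2 < p) :
    ∃ C : ℝ, 0 < C ∧ ∀ N : ℕ, 1 ≤ N →
      Summable (highLowTerm p θ N).uncurry ∧
      ∑' k, ∑' l, highLowTerm p θ N k l ≤ C * ((N : ℝ) ^ (-θ) + (N : ℝ) ^ (-(p - 2))) ∧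
      C * ((N : ℝ) ^ (-θ) + (N : ℝ) ^ (-(p - 2))) ≤ 2 * C * (N : ℝ) ^ (-θ) := by
  have hS : 0 < ∑' n, absRpowNeg ((p - θ) / 2) n := tsum_absRpowNeg_pos (by linarith)
  set C := (2 * ∑' n, absRpowNeg ((p - θ) / 2) n) ^ 2
  have hC : 0 < C := by positivity
  refine ⟨C, hC, fun N hN ↦ ⟨summable_highLowTerm hθ hp N, ?_,
    mul_rpow_neg_add_rpow_neg_le hC.le (by exact_mod_cast hN) (by linarith)⟩⟩
  calc ∑' k, ∑' l, highLowTerm p θ N k l ≤ C * (N + 1 : ℝ) ^ (-θ) :=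
        tsum_tsum_highLowTerm_le hθ hp N
    _ ≤ C * (N : ℝ) ^ (-θ) := by
        gcongr C * ?_
        exact rpow_le_rpow_of_nonpos (by exact_mod_cast hN) (by linarith) (neg_nonpos.2 hθ)
    _ ≤ C * ((N : ℝ) ^ (-θ) + (N : ℝ) ^ (-(p - 2))) := by
        gcongr
        exact le_add_of_nonneg_right (by positivity)

end HighLow

/-- Double sum estimate (second off-diagonal block): for `m ≥ 2` and `θ ∈ (0,2)` there is a
constant `C` such that for every `N ≥ 1`,
`∑_{|k|>N} ∑_{|ℓ|≤N} |ℓ−k|^{−2m} (|ℓ|+1)^{−θ} ≤ C (N^{−θ} + N^{−(2m−2)}) ≤ 2C N^{−θ}`. -/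
theorem double_sum_block_estimate_high_low
    (m : ℕ) (hm : 2 ≤ m) (θ : ℝ) (hθ0 : 0 < θ) (hθ2 : θ < 2) :
    ∃ C : ℝ, 0 < C ∧ ∀ N : ℕ, 1 ≤ N →
      (∑' k : ℤ, ∑' l : ℤ,
        if (N : ℤ) < |k| ∧ |l| ≤ (N : ℤ) then
          |(l : ℝ) - (k : ℝ)| ^ (-(2 * (m : ℝ))) * (|(l : ℝ)| + 1) ^ (-θ)
        else 0) ≤ C * ((N : ℝ) ^ (-θ) + (N : ℝ) ^ (-(2 * (m : ℝ) - 2))) ∧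
      C * ((N : ℝ) ^ (-θ) + (N : ℝ) ^ (-(2 * (m : ℝ) - 2))) ≤ 2 * C * (N : ℝ) ^ (-θ) := by
  have hm' : (2 : ℝ) ≤ m := by exact_mod_cast hm
  obtain ⟨C, hC, h⟩ := double_sum_block_estimate_high_low_general (p := 2 * m) hθ0.le (by linarith)
  exact ⟨C, hC, fun N hN ↦ (h N hN).2⟩
end
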